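/- Let Φ be a rich sequence. The map E ↦ [E]_G defines a bijection between the definable equivalence relations on D_Φ (formulas E(x_{<n}, y_{<n}), for some n, up to T-equivalence on D_Φ, which define an equivalence relation on the realizations of D_Φ in every model of T) and the collection of clopen subsets H ⊆ G_Φ(T) satisfying H = H·H⁻¹ and B_Φ(T) ⊆ H. Moreover, if H = [E]_G and a ∈ M^ℕ realizes D_Φ and enumerates a countable model M, with e = tp(a), then the map tp(a,b) ↦ [b]_E (the E-class of b) is a bijection between the coset space {gH : g ∈ G_Φ(T), t_g = e} and the set of E-classes of realizations of D_Φ in M. -/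

import Mathlib

open FirstOrder FirstOrder.Language

variable {L : FirstOrder.Language}

/-- A sequence `Φ = (φ_n(x_{<n}, y))_n` of formulas (with `y` a single variable) is
rich if every formula `φ(x_{<k}, y)` appears, up to dummy variables, as `φ_n` for some
`n ≥ k`. -/
def IsRich (Φ : ∀ n : ℕ, L.Formula (Fin n ⊕ Unit)) : Prop :=
  ∀ (k : ℕ) (ψ : L.Formula (Fin k ⊕ Unit)),
    ∃ (n : ℕ) (h : k ≤ n), Φ n = ψ.relabel (Sum.map (Fin.castLE h) id)

/-- `a_{<n}` realizes `D_{Φ,n}`, i.e.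
`⋀_{k<n} ∀y [φ_k(a_{<k}, y) → φ_k(a_{<k}, a_k)]` holds in `M`. -/
def RealizesDn (Φ : ∀ n : ℕ, L.Formula (Fin n ⊕ Unit)) {M : Type*} [L.Structure M]
    (n : ℕ) (a : Fin n → M) : Prop :=
  ∀ (k : Fin n) (y : M),
    (Φ k).Realize (Sum.elim (fun i : Fin k => a (Fin.castLE k.2.le i)) (fun _ => y)) →
    (Φ k).Realize (Sum.elim (fun i : Fin k => a (Fin.castLE k.2.le i)) (fun _ => a k))

/-- The sequence `a : ℕ → M` realizes the partial type `D_Φ = ⋀_n D_{Φ,n}(x_{<n})`. -/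
def RealizesD (Φ : ∀ n : ℕ, L.Formula (Fin n ⊕ Unit)) {M : Type*} [L.Structure M]
    (a : ℕ → M) : Prop :=
  ∀ (k : ℕ) (y : M),
    (Φ k).Realize (Sum.elim (fun i : Fin k => a i) (fun _ => y)) →
    (Φ k).Realize (Sum.elim (fun i : Fin k => a i) (fun _ => a k))

/-- The (Boolean-valued) complete type of a tuple `a : α → M`: the set of formulas in
variables `α` satisfied by `a`, viewed as a point of the Stone-type space
`L.Formula α → Bool` (with the product topology, `Bool` discrete). -/
noncomputable def tpFun {M : Type*} [L.Structure M] {α : Type*} (a : α → M) :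
    L.Formula α → Bool :=
  fun φ => @decide (φ.Realize a) (Classical.propDecidable _)


/-- `S_{kD_Φ}(T)`: the space of types of `k`-tuples of realizations of `D_Φ`. -/
def SkD (T : L.Theory) (Φ : ∀ n : ℕ, L.Formula (Fin n ⊕ Unit)) (k : ℕ) :
    Set (L.Formula (Fin k × ℕ) → Bool) :=
  {p | ∃ (M : Type) (_ : L.Structure M) (_ : T.Model M) (_ : Countable M)
    (a : Fin k → ℕ → M), (∀ i, RealizesD Φ (a i)) ∧ p = tpFun (fun q => a q.1 q.2)}

/-- `S_{kD_{Φ,n}}(T)`: the space of types of `k`-tuples of realizations of `D_{Φ,n}`. -/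
def SkDn (T : L.Theory) (Φ : ∀ n : ℕ, L.Formula (Fin n ⊕ Unit)) (k n : ℕ) :
    Set (L.Formula (Fin k × Fin n) → Bool) :=
  {p | ∃ (M : Type) (_ : L.Structure M) (_ : T.Model M) (_ : Countable M)
    (a : Fin k → Fin n → M), (∀ i, RealizesDn Φ n (a i)) ∧ p = tpFun (fun q => a q.1 q.2)}

/-- `G_Φ^{[k]}(T)`: the set of types `tp(a⁰, …, a^{k-1})` where all `a^i` are
enumerations of one common countable model of `T` and each realizes `D_Φ`. -/
def GPhiK (T : L.Theory) (Φ : ∀ n : ℕ, L.Formula (Fin n ⊕ Unit)) (k : ℕ) :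
    Set (L.Formula (Fin k × ℕ) → Bool) :=
  {p | ∃ (M : Type) (_ : L.Structure M) (_ : T.Model M) (_ : Countable M)
    (a : Fin k → ℕ → M), (∀ i, Function.Surjective (a i)) ∧ (∀ i, RealizesD Φ (a i)) ∧
    p = tpFun (fun q => a q.1 q.2)}

/-- The restriction map `π_{k,n} : tp(a⁰, …, a^{k-1}) ↦ tp(a⁰_{<n}, …, a^{k-1}_{<n})`. -/
def resMap (k n : ℕ) :
    (L.Formula (Fin k × ℕ) → Bool) → (L.Formula (Fin k × Fin n) → Bool) :=
  fun p φ => p (φ.relabel fun q => (q.1, (q.2 : ℕ)))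

/-- `B_Φ(T) = S_{D_Φ}(T)`: the set of complete types extending `D_Φ`. -/
def BPhi (T : L.Theory) (Φ : ∀ n : ℕ, L.Formula (Fin n ⊕ Unit)) :
    Set (L.Formula ℕ → Bool) :=
  {p | ∃ (M : Type) (_ : L.Structure M) (_ : T.Model M) (_ : Countable M) (a : ℕ → M),
    RealizesD Φ a ∧ p = tpFun a}

/-- `G_Φ(T)`: the set of types `tp(a,b)` where `a` and `b` are enumerations of one
common countable model of `T` and both realize `D_Φ`. -/
def GPhi (T : L.Theory) (Φ : ∀ n : ℕ, L.Formula (Fin n ⊕ Unit)) :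
    Set (L.Formula (ℕ ⊕ ℕ) → Bool) :=
  {p | ∃ (M : Type) (_ : L.Structure M) (_ : T.Model M) (_ : Countable M) (a b : ℕ → M),
    Function.Surjective a ∧ Function.Surjective b ∧
    RealizesD Φ a ∧ RealizesD Φ b ∧ p = tpFun (Sum.elim a b)}

/-- The source map `tp(a,b) ↦ tp(b)`. -/
def srcMap : (L.Formula (ℕ ⊕ ℕ) → Bool) → (L.Formula ℕ → Bool) :=
  fun p φ => p (φ.relabel Sum.inr)

/-- The target map `tp(a,b) ↦ tp(a)`. -/
def tgtMap : (L.Formula (ℕ ⊕ ℕ) → Bool) → (L.Formula ℕ → Bool) :=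
  fun p φ => p (φ.relabel Sum.inl)


/-- The formula `x_i = y_i` in the variables `ℕ ⊕ ℕ`. -/
def eqFml (i : ℕ) : L.Formula (ℕ ⊕ ℕ) :=
  Term.equal (Term.var (Sum.inl i)) (Term.var (Sum.inr i))

/-- `[Eⁿ]_G`: the set of types in `G_Φ(T)` containing the formula
`Eⁿ(x,y) : x_{<n} = y_{<n}`. -/
def EnSet (T : L.Theory) (Φ : ∀ n : ℕ, L.Formula (Fin n ⊕ Unit)) (n : ℕ) :
    Set (L.Formula (ℕ ⊕ ℕ) → Bool) :=
  {p ∈ GPhi T Φ | ∀ i < n, p (eqFml i) = true}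


/-- The set of products `A · A'` of all composable pairs from `A` and `A'`:
`tp(a,b) · tp(b,c) = tp(a,c)` for enumerations `a, b, c` of a common countable model,
each realizing `D_Φ`. -/
def prodSet (T : L.Theory) (Φ : ∀ n : ℕ, L.Formula (Fin n ⊕ Unit))
    (A A' : Set (L.Formula (ℕ ⊕ ℕ) → Bool)) : Set (L.Formula (ℕ ⊕ ℕ) → Bool) :=
  {r | ∃ (M : Type) (_ : L.Structure M) (_ : T.Model M) (_ : Countable M)
    (a b c : ℕ → M),
    Function.Surjective a ∧ Function.Surjective b ∧ Function.Surjective c ∧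
    RealizesD Φ a ∧ RealizesD Φ b ∧ RealizesD Φ c ∧
    tpFun (Sum.elim a b) ∈ A ∧ tpFun (Sum.elim b c) ∈ A' ∧ r = tpFun (Sum.elim a c)}

/-- The set of inverses `A⁻¹ = {g⁻¹ : g ∈ A}`, where `tp(a,b)⁻¹ = tp(b,a)`. -/
def invSet (T : L.Theory) (Φ : ∀ n : ℕ, L.Formula (Fin n ⊕ Unit))
    (A : Set (L.Formula (ℕ ⊕ ℕ) → Bool)) : Set (L.Formula (ℕ ⊕ ℕ) → Bool) :=
  {r | ∃ (M : Type) (_ : L.Structure M) (_ : T.Model M) (_ : Countable M)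
    (a b : ℕ → M),
    Function.Surjective a ∧ Function.Surjective b ∧
    RealizesD Φ a ∧ RealizesD Φ b ∧
    tpFun (Sum.elim a b) ∈ A ∧ r = tpFun (Sum.elim b a)}

/-- `B_Φ(T)`, identified inside `S_{2×ℕ}(T)` with the set of types `tp(a,a)`. -/
def basePairs (T : L.Theory) (Φ : ∀ n : ℕ, L.Formula (Fin n ⊕ Unit)) :
    Set (L.Formula (ℕ ⊕ ℕ) → Bool) :=
  {r | ∃ (M : Type) (_ : L.Structure M) (_ : T.Model M) (_ : Countable M) (a : ℕ → M),
    Function.Surjective a ∧ RealizesD Φ a ∧ r = tpFun (Sum.elim a a)}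


/-- `[E]_G`: the set of types in `G_Φ(T)` containing the formula `E(x_{<n}, y_{<n})`. -/
def FmlPairSet (T : L.Theory) (Φ : ∀ n : ℕ, L.Formula (Fin n ⊕ Unit)) (n : ℕ)
    (E : L.Formula (Fin n ⊕ Fin n)) : Set (L.Formula (ℕ ⊕ ℕ) → Bool) :=
  {p ∈ GPhi T Φ | p (E.relabel (Sum.map (Fin.val) (Fin.val))) = true}

/-- `E(a, b)` for sequences `a, b : ℕ → M`: the formula `E` holds of
`(a_{<n}, b_{<n})`. -/
def RealizePair {n : ℕ} (E : L.Formula (Fin n ⊕ Fin n)) {M : Type*} [L.Structure M]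
    (a b : ℕ → M) : Prop :=
  E.Realize (Sum.elim (fun i : Fin n => a i) (fun i : Fin n => b i))

/-- `E(x_{<n}, y_{<n})` is a definable equivalence relation on `D_Φ`: in every
(countable) model of `T` it restricts to a reflexive, symmetric and transitive relation
on the realizations of `D_Φ`. -/
def IsDefEquivRel (T : L.Theory) (Φ : ∀ n : ℕ, L.Formula (Fin n ⊕ Unit)) (n : ℕ)
    (E : L.Formula (Fin n ⊕ Fin n)) : Prop :=
  ∀ (M : Type) (_ : L.Structure M) (_ : T.Model M) (_ : Countable M),
    (∀ a : ℕ → M, RealizesD Φ a → RealizePair E a a) ∧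
    (∀ a b : ℕ → M, RealizesD Φ a → RealizesD Φ b →
      RealizePair E a b → RealizePair E b a) ∧
    (∀ a b c : ℕ → M, RealizesD Φ a → RealizesD Φ b → RealizesD Φ c →
      RealizePair E a b → RealizePair E b c → RealizePair E a c)

/-- The coset `gH = {g · h : h ∈ H}` in `G_Φ(T)`. -/
def coset (T : L.Theory) (Φ : ∀ n : ℕ, L.Formula (Fin n ⊕ Unit))
    (g : L.Formula (ℕ ⊕ ℕ) → Bool) (H : Set (L.Formula (ℕ ⊕ ℕ) → Bool)) :
    Set (L.Formula (ℕ ⊕ ℕ) → Bool) :=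
  prodSet T Φ {g} H

/-!
Richness has two consequences. By the Tarski–Vaught test, a realization of `D_Φ` enumerates an
elementary submodel; and in a countable model every finite sequence realizing `D_{Φ,n}` extends to
an enumeration of the model realizing `D_Φ`.

Enumerations of the same type differ by an isomorphism, so a subset of `G_Φ(T)` amounts to an
isomorphism-invariant family of relations on the enumerations realizing `D_Φ` of the countable
models of `T`, and the conditions `H = H·H⁻¹` and `B_Φ(T) ⊆ H` say that these are equivalence
relations. For `[E]_G` the relation is `E` itself, and since every realization of `D_Φ` agrees below
`n` with an enumeration, nothing is lost in restricting `E` to enumerations.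

Conversely, let `H` be clopen with `H = H·H⁻¹` and `B_Φ(T) ⊆ H`. As `B_Φ(T)` is compact and
contained in `H`, there is an `n` such that enumerations agreeing below `n` are `H`-related; by
transitivity, whether `tp(a,b) ∈ H` depends only on `a_{<n}` and `b_{<n}`. Both `H` and its
complement are open, so for each pair `(a,b)` a formula `θ(x_{<n}, y_{<n})`, true of `(a,b)`, forces
membership in `H` or in the complement: in a formula forcing `tp(a,b)` into the right open set,
quantify the variables beyond `n` existentially over sequences realizing `D_{Φ,m}`, which extend to
enumerations. Finitely many such `θ` cover the compact space of types of pairs of realizations of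
`D_Φ`; the disjunction of those that force membership in `H` defines `H`.
-/

section Types

variable {α β M N : Type*} [L.Structure M] [L.Structure N]

theorem tpFun_eq_true_iff {a : α → M} {φ : L.Formula α} : tpFun a φ = true ↔ φ.Realize a := by
  simp [tpFun]

theorem tpFun_eq_tpFun_iff {a : α → M} {b : α → N} :
    tpFun (L := L) a = tpFun b ↔ ∀ φ : L.Formula α, φ.Realize a ↔ φ.Realize b := by
  simp only [funext_iff, ← tpFun_eq_true_iff, ← Bool.eq_iff_iff]

theorem tpFun_comp_equiv (f : M ≃[L] N) (a : α → M) : tpFun (L := L) (f ∘ a) = tpFun a :=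
  tpFun_eq_tpFun_iff.2 fun φ => StrongHomClass.realize_formula f φ

theorem exists_equiv_of_tpFun_eq {a : α → M} {b : α → N} (ha : Function.Surjective a)
    (hb : Function.Surjective b) (hab : tpFun (L := L) a = tpFun b) :
    ∃ f : M ≃[L] N, f ∘ a = b := by
  rw [tpFun_eq_tpFun_iff] at hab
  have a_surjInv : a ∘ Function.surjInv ha = id := funext (Function.surjInv_eq ha)
  let f : M ↪ₑ[L] N :=
    { toFun := b ∘ Function.surjInv ha
      map_formula' := fun n φ x => by
        have := hab (φ.relabel (Function.surjInv ha ∘ x))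
        rwa [Formula.realize_relabel, Formula.realize_relabel, ← Function.comp_assoc, a_surjInv,
          Function.id_comp, Iff.comm] at this }
  have f_comp : f ∘ a = b := funext fun i => by
    have := hab (Term.equal (Term.var (Function.surjInv ha (a i))) (Term.var i))
    rw [Formula.realize_equal, Formula.realize_equal] at this
    exact this.1 (Function.surjInv_eq ha (a i))
  have f_bij : Function.Bijective f := ⟨f.injective, .of_comp (f_comp ▸ hb : (f ∘ a).Surjective)⟩
  exact ⟨⟨.ofBijective f f_bij, fun F x => f.map_fun F x, fun R x => f.map_rel R x⟩, f_comp⟩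

open Classical in
theorem exists_formula_of_tpFun_mem_isOpen {U : Set (L.Formula α → Bool)} (hU : IsOpen U)
    {a : α → M} (ha : tpFun a ∈ U) :
    ∃ φ : L.Formula α, φ.Realize a ∧
      ∀ {N : Type*} [L.Structure N] {b : α → N}, φ.Realize b → tpFun b ∈ U := by
  obtain ⟨I, u, hu, hIU⟩ := isOpen_pi_iff.1 hU _ ha
  refine ⟨Formula.iInf fun ψ : I => if ψ.1.Realize a then ψ.1 else ψ.1.not, ?_, ?_⟩
  · rw [Formula.realize_iInf]
    intro ψ
    split_ifs with h
    exacts [h, h]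
  · intro N _ b hb
    rw [Formula.realize_iInf] at hb
    refine hIU fun ψ hψ => ?_
    have tp_eq : tpFun b ψ = tpFun a ψ := by
      rw [Bool.eq_iff_iff, tpFun_eq_true_iff, tpFun_eq_true_iff]
      have := hb ⟨ψ, hψ⟩
      split_ifs at this with h
      exacts [iff_of_true this h, iff_of_false this h]
    exact tp_eq ▸ (hu ψ hψ).2

theorem exists_realize_iff_of_forall_lt (r : α → ℕ) (φ : L.Formula α) :
    ∃ m, ∀ {M : Type*} [L.Structure M] {a b : α → M}, (∀ i, r i < m → a i = b i) →
      (φ.Realize a ↔ φ.Realize b) := by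
  classical
  refine ⟨(BoundedFormula.freeVarFinset φ).sup r + 1, fun {M} _ a b hab => ?_⟩
  have hab' (i : BoundedFormula.freeVarFinset φ) : a i = b i :=
    hab i (Nat.lt_succ_of_le (Finset.le_sup i.2))
  exact (BoundedFormula.realize_restrictFreeVar (f := Subtype.val) a fun _ => rfl).symm.trans
    (BoundedFormula.realize_restrictFreeVar (f := Subtype.val) b hab')

open Classical in
/-- The formula `∃ z, φ`, where `z` lists the free variables of `φ` outside the range of `g`, and
the other free variables are renamed along a section of `g`. Semantically, it defines the set of
`x ∘ g` for which `φ` holds of some `y` with `y ∘ g = x ∘ g`. -/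
noncomputable def existsOff (g : α → β) (φ : L.Formula β) : L.Formula α :=
  Formula.iExs (BoundedFormula.freeVarFinset φ) <| BoundedFormula.restrictFreeVar φ fun i =>
    if h : i.1 ∈ Set.range g then Sum.inl h.choose else Sum.inr i

theorem realize_existsOff {g : α → β} {φ : L.Formula β} {x : β → M} :
    (existsOff g φ).Realize (x ∘ g) ↔ ∃ y, y ∘ g = x ∘ g ∧ φ.Realize y := by
  classical
  rw [existsOff, Formula.realize_iExs]
  constructor
  · rintro ⟨z, hz⟩
    let y : β → M := fun i =>
      if h : i ∈ BoundedFormula.freeVarFinset φ ∧ i ∉ Set.range g then z ⟨i, h.1⟩ else x i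
    refine ⟨y, by ext; simp [y], (BoundedFormula.realize_restrictFreeVar y fun i => ?_).1 hz⟩
    by_cases hi : i.1 ∈ Set.range g
    · rw [dif_pos hi, Sum.elim_inl, Function.comp_apply, hi.choose_spec]
      have : y i = x i := dif_neg fun h => h.2 hi
      exact this.symm
    · rw [dif_neg hi, Sum.elim_inr]
      have : y i = z i := dif_pos ⟨i.2, hi⟩
      exact this.symm
  · rintro ⟨y, hyx, hy⟩
    refine ⟨fun i => y i, (BoundedFormula.realize_restrictFreeVar y fun i => ?_).2 hy⟩
    by_cases hi : i.1 ∈ Set.range g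
    · rw [dif_pos hi, Sum.elim_inl, ← hyx, Function.comp_apply, hi.choose_spec]
    · rw [dif_neg hi, Sum.elim_inr]

end Types

section Compactness

theorem exists_countable_elementaryEmbedding [Countable L.Symbols] {N : Type*} [L.Structure N]
    {α : Type*} [Countable α] (b : α → N) :
    ∃ (M : Type) (_ : L.Structure M) (_ : Countable M) (f : M ↪ₑ[L] N) (a : α → M),
      f ∘ a = b := by
  have exists_countable : ∃ S : L.ElementarySubstructure N, Countable S ∧ ∀ i, b i ∈ S := by
    rcases finite_or_infinite N with hN | hN
    · exact ⟨⊤, inferInstance, fun i => ElementarySubstructure.mem_top _⟩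
    · have card_language : L.card ≤ Cardinal.aleph0 := Cardinal.mk_le_aleph0
      obtain ⟨S, hbS, hS⟩ := exists_elementarySubstructure_card_eq L (Set.range b)
        Cardinal.aleph0.{0} le_rfl (by simpa using (Set.countable_range b).le_aleph0)
        (by simpa using card_language) (by simp)
      have card_le : Cardinal.mk S ≤ Cardinal.aleph0 := by simpa using hS.le
      exact ⟨S, Cardinal.mk_le_aleph0_iff.1 card_le, fun i => hbS ⟨i, rfl⟩⟩
  obtain ⟨S, hS, hbS⟩ := exists_countable
  let := (equivShrink.{0} S).inducedStructure (L := L)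
  let e : S ≃[L] Shrink.{0} S := (equivShrink.{0} S).inducedStructureEquiv
  refine ⟨Shrink.{0} S, inferInstance, (equivShrink.{0} S).symm.injective.countable,
    S.subtype.comp e.symm.toElementaryEmbedding, fun i => e ⟨b i, hbS i⟩, ?_⟩
  ext i
  simp

/-- The Stone space `S_α(T)`, realized inside `L.Formula α → Bool` as the set of types of `α`-tuples
in countable models of `T`. -/
def stoneSpace (T : L.Theory) (α : Type*) : Set (L.Formula α → Bool) :=
  {p | ∃ (M : Type) (_ : L.Structure M) (_ : T.Model M) (_ : Countable M) (_ : Nonempty M)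
    (a : α → M), p = tpFun a}

theorem isClopen_setOf_apply_eq_true {ι : Type*} (i : ι) : IsClopen {p : ι → Bool | p i = true} :=
  (isClopen_discrete {true}).preimage (continuous_apply i)

open Classical in
theorem isCompact_stoneSpace [Countable L.Symbols] (T : L.Theory) (α : Type*) [Countable α] :
    IsCompact (stoneSpace T α) := by
  let F (p : T.CompleteType α) (φ : L.Formula α) : Bool := decide (Formula.equivSentence φ ∈ p)
  have F_continuous : Continuous F := continuous_pi fun φ => (continuous_bool_rng true).2 <| by
    convert CompleteType.isClopen_typesWith (T := T) (Formula.equivSentence φ)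
    ext p
    simp [F, Theory.CompleteType.mem_typesWith_iff]
  convert isCompact_range F_continuous
  ext p
  constructor
  · rintro ⟨M, _, _, _, _, a, rfl⟩
    exact ⟨T.typeOf a, funext fun φ => by simp [F, tpFun]⟩
  · rintro ⟨p, rfl⟩
    obtain ⟨N, b, rfl⟩ := Theory.exists_modelType_is_realized_in T p
    obtain ⟨M, _, hM, f, a, rfl⟩ := exists_countable_elementaryEmbedding (L := L) b
    have M_model : T.Model M := (f.theory_model_iff T).2 inferInstance
    have M_nonempty : Nonempty M := f.elementarilyEquivalent.symm.nonempty
    exact ⟨M, _, M_model, hM, M_nonempty, a, funext fun φ => by simp [F, tpFun, f.map_formula]⟩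

theorem isCompact_stoneSpace_inter [Countable L.Symbols] (T : L.Theory) {α ι : Type*} [Countable α]
    (Γ : ι → L.Formula α) : IsCompact (stoneSpace T α ∩ {p | ∀ i, p (Γ i) = true}) := by
  simp only [Set.ofPred_forall]
  exact (isCompact_stoneSpace T α).inter_right
    (isClosed_iInter fun i => (isClopen_setOf_apply_eq_true (Γ i)).isClosed)

theorem exists_formula_separating_of_isCompact {T : L.Theory} {α β : Type*} (g : α → β)
    {X A B : Set (L.Formula β → Bool)} (hX : IsCompact X) (hXT : X ⊆ stoneSpace T β) (hA : A ⊆ X)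
    (hB : B ⊆ X)
    (h : ∀ p ∈ X, ∃ θ : L.Formula α, p (θ.relabel g) = true ∧
      ((∀ q ∈ A, ¬ q (θ.relabel g) = true) ∨ ∀ q ∈ B, ¬ q (θ.relabel g) = true)) :
    ∃ E : L.Formula α, (∀ q ∈ A, q (E.relabel g) = true) ∧ ∀ q ∈ B, ¬ q (E.relabel g) = true := by
  have sup_iff {q} (hq : q ∈ X) (E E' : L.Formula α) :
      q ((E ⊔ E').relabel g) = true ↔ q (E.relabel g) = true ∨ q (E'.relabel g) = true := by
    obtain ⟨M, _, _, _, _, a, rfl⟩ := hXT hq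
    simp [tpFun_eq_true_iff, Formula.realize_relabel, Formula.realize_sup]
  have bot_iff {q} (hq : q ∈ X) : ¬ q ((⊥ : L.Formula α).relabel g) = true := by
    obtain ⟨M, _, _, _, _, a, rfl⟩ := hXT hq
    simp [tpFun_eq_true_iff, Formula.realize_relabel]
  suffices ∃ E : L.Formula α, (∀ q ∈ A, q ∈ X → q (E.relabel g) = true) ∧
      ∀ q ∈ B, ¬ q (E.relabel g) = true from
    this.imp fun E hE => ⟨fun q hq => hE.1 q hq (hA hq), hE.2⟩
  refine hX.induction_on (p := fun s => ∃ E : L.Formula α,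
    (∀ q ∈ A, q ∈ s → q (E.relabel g) = true) ∧ ∀ q ∈ B, ¬ q (E.relabel g) = true) ?_ ?_ ?_ ?_
  · exact ⟨⊥, fun q _ hq => hq.elim, fun q hq => bot_iff (hB hq)⟩
  · exact fun s t hst ⟨E, hEA, hEB⟩ => ⟨E, fun q hqA hqs => hEA q hqA (hst hqs), hEB⟩
  · rintro s t ⟨E, hEA, hEB⟩ ⟨E', hEA', hEB'⟩
    refine ⟨E ⊔ E', fun q hqA hq => (sup_iff (hA hqA) E E').2 (hq.imp (hEA q hqA) (hEA' q hqA)),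
      fun q hq hEE' => ((sup_iff (hB hq) E E').1 hEE').elim (hEB q hq) (hEB' q hq)⟩
  · intro p hp
    obtain ⟨θ, hpθ, hθ⟩ := h p hp
    refine ⟨_, mem_nhdsWithin_of_mem_nhds
      ((isClopen_setOf_apply_eq_true (θ.relabel g)).isOpen.mem_nhds hpθ), ?_⟩
    rcases hθ with hθA | hθB
    · exact ⟨⊥, fun q hqA hq => (hθA q hqA hq).elim, fun q hq => bot_iff (hB hq)⟩
    · exact ⟨θ, fun q _ hq => hq, hθB⟩

end Compactness

section Rich

variable {M N : Type*} [L.Structure M] [L.Structure N] {Φ : ∀ n : ℕ, L.Formula (Fin n ⊕ Unit)}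

/-- The `k`-th conjunct `∀ y, φ_k(x_{<k}, y) → φ_k(x_{<k}, x_k)` of `D_Φ`, as a formula in the
variables `x = (x_n : n ∈ ℕ)`. -/
noncomputable def dFormula (Φ : ∀ n : ℕ, L.Formula (Fin n ⊕ Unit)) (k : ℕ) : L.Formula ℕ :=
  Formula.iAlls Unit (((Φ k).relabel (Sum.map Fin.val id)).imp
    ((Φ k).relabel (Sum.elim (fun i => Sum.inl i.val) fun _ => Sum.inl k)))

theorem realize_dFormula {k : ℕ} {a : ℕ → M} :
    (dFormula Φ k).Realize a ↔ ∀ y,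
      (Φ k).Realize (Sum.elim (fun i : Fin k => a i) fun _ => y) →
      (Φ k).Realize (Sum.elim (fun i : Fin k => a i) fun _ => a k) := by
  have elim_comp_elim (y : Unit → M) :
      Sum.elim a y ∘ Sum.elim (fun i : Fin k => Sum.inl i.val) (fun _ : Unit => Sum.inl k) =
        Sum.elim (fun i : Fin k => a i) fun _ => a k := by
    rw [Sum.comp_elim]; rfl
  simp only [dFormula, Formula.realize_iAlls, Formula.realize_imp, Formula.realize_relabel,
    Sum.elim_comp_map, elim_comp_elim]
  exact (Equiv.funUnique Unit M).forall_congr_left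

theorem realizesDn_iff_forall_realize_dFormula {n : ℕ} {a : ℕ → M} :
    RealizesDn Φ n (fun i => a i) ↔ ∀ k : Fin n, (dFormula Φ k).Realize a :=
  forall_congr' fun _ => realize_dFormula.symm

theorem realizesD_iff_forall_realize_dFormula {a : ℕ → M} :
    RealizesD Φ a ↔ ∀ k, (dFormula Φ k).Realize a :=
  forall_congr' fun _ => realize_dFormula.symm

theorem RealizesD.realizesDn {a : ℕ → M} (ha : RealizesD Φ a) (n : ℕ) :
    RealizesDn Φ n fun i => a i :=
  fun k => ha k

theorem realizesD_congr {a : ℕ → M} {b : ℕ → N} (hab : tpFun (L := L) a = tpFun b) :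
    RealizesD Φ a ↔ RealizesD Φ b := by
  simp only [realizesD_iff_forall_realize_dFormula, tpFun_eq_tpFun_iff.1 hab]

theorem RealizesD.exists_realize (hΦ : IsRich Φ) {a : ℕ → M} (ha : RealizesD Φ a)
    (ψ : L.Formula (ℕ ⊕ Unit)) {y : M} (hy : ψ.Realize (Sum.elim a fun _ => y)) :
    ∃ n, ψ.Realize (Sum.elim a fun _ => a n) := by
  obtain ⟨m, hm⟩ := exists_realize_iff_of_forall_lt (Sum.elim id fun _ => 0) ψ
  let g : Fin m ⊕ Unit → ℕ ⊕ Unit := Sum.map Fin.val id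
  have realize_iff (x : ℕ ⊕ Unit → M) : (existsOff g ψ).Realize (x ∘ g) ↔ ψ.Realize x := by
    rw [realize_existsOff]
    refine ⟨fun ⟨x', hx', h⟩ => (hm ?_).1 h, fun h => ⟨x, rfl, h⟩⟩
    rintro (i | i) hi
    exacts [congrFun hx' (Sum.inl ⟨i, hi⟩), congrFun hx' (Sum.inr i)]
  obtain ⟨n, hn, hΦn⟩ := hΦ m (existsOff g ψ)
  have realize_Φ_iff (z : M) : (Φ n).Realize (Sum.elim (fun i : Fin n => a i) fun _ => z) ↔
      ψ.Realize (Sum.elim a fun _ => z) := by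
    rw [hΦn, Formula.realize_relabel, ← realize_iff]
    simp only [g, Sum.elim_comp_map]
    rfl
  exact ⟨n, (realize_Φ_iff _).1 (ha n y ((realize_Φ_iff y).2 hy))⟩

theorem RealizesD.exists_elementarySubstructure (hΦ : IsRich Φ) {a : ℕ → M}
    (ha : RealizesD Φ a) : ∃ S : L.ElementarySubstructure M, (S : Set M) = Set.range a := by
  let S : L.Substructure M :=
    { carrier := Set.range a
      fun_mem := fun f v hv => by
        choose j hj using hv
        obtain ⟨n, hn⟩ := ha.exists_realize hΦ
          (Term.equal (Term.func f fun i => Term.var (Sum.inl (j i))) (Term.var (Sum.inr ())))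
          (y := Structure.funMap f v) (by simp [Formula.realize_equal, hj])
        exact ⟨n, by simpa [Formula.realize_equal, hj] using hn.symm⟩ }
  have S_isElementary : S.IsElementary := by
    refine S.isElementary_of_exists fun n φ x y hy => ?_
    choose j hj using fun i => (x i).2
    let g : Empty ⊕ Fin (n + 1) → ℕ ⊕ Unit :=
      Sum.elim Empty.elim (Fin.snoc (α := fun _ => ℕ ⊕ Unit) (fun i => Sum.inl (j i)) (Sum.inr ()))
    have elim_comp (z : M) : (Sum.elim a fun _ => z) ∘ g =
        Sum.elim default (Fin.snoc ((↑) ∘ x) z : _ → M) := by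
      rw [Sum.comp_elim, Subsingleton.elim (_ ∘ Empty.elim) default]
      congr 1
      ext i
      cases i using Fin.lastCases <;> simp [hj]
    have realize_iff (z : M) : (φ.toFormula.relabel g).Realize (Sum.elim a fun _ => z) ↔
        φ.Realize default (Fin.snoc ((↑) ∘ x) z : _ → M) := by
      rw [Formula.realize_relabel, elim_comp, BoundedFormula.realize_toFormula, Sum.elim_comp_inl,
        Sum.elim_comp_inr]
    obtain ⟨m, hm⟩ := ha.exists_realize hΦ _ ((realize_iff y).2 hy)
    exact ⟨⟨a m, m, rfl⟩, (realize_iff _).1 hm⟩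
  exact ⟨⟨S, S_isElementary⟩, rfl⟩

/-- The enumerations of `M` that realize `D_Φ`; for `M` countable, these are the objects that
`G_Φ(T)` relates. -/
def DEnumeration (Φ : ∀ n : ℕ, L.Formula (Fin n ⊕ Unit)) (M : Type*) [L.Structure M] :
    Set (ℕ → M) :=
  {a | Function.Surjective a ∧ RealizesD Φ a}

theorem RealizesD.exists_tpFun_eq (hΦ : IsRich Φ) {a : ℕ → M} (ha : RealizesD Φ a) :
    ∃ (S : L.ElementarySubstructure M) (b : ℕ → S),
      b ∈ DEnumeration Φ S ∧ tpFun (L := L) b = tpFun a := by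
  obtain ⟨S, hS⟩ := ha.exists_elementarySubstructure hΦ
  have mem_S (i) : a i ∈ S := hS.superset ⟨i, rfl⟩
  let b (i : ℕ) : S := ⟨a i, mem_S i⟩
  have b_surjective : Function.Surjective b := fun ⟨x, hx⟩ =>
    (hS.subset hx).imp fun i hi => Subtype.ext hi
  have tp_eq : tpFun (L := L) b = tpFun a :=
    tpFun_eq_tpFun_iff.2 fun φ => (S.subtype.map_formula φ b).symm
  exact ⟨S, b, ⟨b_surjective, (realizesD_congr tp_eq).2 ha⟩, tp_eq⟩

theorem IsRich.infinite_setOf_forall_realize (hΦ : IsRich Φ) (M : Type*) [L.Structure M] :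
    {k | ∀ v : Fin k ⊕ Unit → M, (Φ k).Realize v}.Infinite := by
  refine Set.infinite_of_forall_exists_gt fun m => ?_
  obtain ⟨k, hmk, hΦk⟩ := hΦ (m + 1) ⊤
  exact ⟨k, fun v => by rw [hΦk, Formula.realize_relabel]; exact id, hmk⟩

theorem exists_forall_exists_mem_eq_of_infinite {P : Set ℕ} (hP : P.Infinite) (X : Type*)
    [Nonempty X] [Countable X] : ∃ t : ℕ → X, ∀ x, ∃ k ∈ P, t k = x := by
  classical
  obtain ⟨f, hf⟩ := exists_surjective_nat X
  refine ⟨fun k => f (Nat.count (· ∈ P) k), fun x => ?_⟩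
  obtain ⟨j, rfl⟩ := hf x
  exact ⟨Nat.nth (· ∈ P) j, Nat.nth_mem_of_infinite hP j,
    congrArg f (Nat.count_nth_of_infinite (p := (· ∈ P)) hP j)⟩

theorem exists_seq_forall_rel {X : Type*} {R : ∀ k : ℕ, (Fin k → X) → X → Prop}
    (hR : ∀ k p, ∃ y, R k p y) : ∃ a : ℕ → X, ∀ k, R k (fun i => a i) (a k) := by
  choose F hF using hR
  refine ⟨Nat.lt_wfRel.wf.fix fun k a => F k fun i => a i i.2, fun k => ?_⟩
  rw [WellFounded.fix_eq]
  exact hF k _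

theorem exists_forall_imp_and_imp_eq {X : Type*} (p : X → Prop) (t : X) :
    ∃ y, (∀ z, p z → p y) ∧ (p t → y = t) := by
  by_cases hp : ∃ z, p z ∧ ¬ p t
  · exact hp.imp fun y hy => ⟨fun _ _ => hy.1, fun ht => absurd ht hy.2⟩
  · exact ⟨t, fun z hz => by_contra fun ht => hp ⟨z, hz, ht⟩, fun _ => rfl⟩

/- Wherever `φ_k` is valid the choice of `a_k` is free, and richness makes this happen infinitely
often; `t` schedules every element of `M` at such a stage. -/
theorem exists_dEnumeration_eqOn (hΦ : IsRich Φ) [Countable M] {n : ℕ} {c : ℕ → M}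
    (hc : RealizesDn Φ n fun i => c i) :
    ∃ a ∈ DEnumeration Φ M, Set.EqOn a c (Set.Iio n) := by
  have : Nonempty M := ⟨c 0⟩
  obtain ⟨t, ht⟩ := exists_forall_exists_mem_eq_of_infinite
    ((hΦ.infinite_setOf_forall_realize M).sdiff (Set.finite_Iio n)) M
  let p (k : ℕ) (a : Fin k → M) (y : M) : Prop := (Φ k).Realize (Sum.elim a fun _ => y)
  obtain ⟨a, ha⟩ := exists_seq_forall_rel (R := fun k a y =>
      (k < n → y = c k) ∧ (n ≤ k → (∀ z, p k a z → p k a y) ∧ (p k a (t k) → y = t k)))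
    fun k a => by
      rcases lt_or_ge k n with hk | hk
      · exact ⟨c k, fun _ => rfl, fun h => absurd h hk.not_ge⟩
      · exact (exists_forall_imp_and_imp_eq (p k a) (t k)).imp fun y hy =>
          ⟨fun h => absurd h hk.not_gt, fun _ => hy⟩
  have a_eqOn : Set.EqOn a c (Set.Iio n) := fun k => (ha k).1
  refine ⟨a, ⟨fun m => ?_, fun k => ?_⟩, a_eqOn⟩
  · obtain ⟨k, ⟨k_valid, hk⟩, rfl⟩ := ht m
    exact ⟨k, ((ha k).2 (not_lt.1 hk)).2 (k_valid _)⟩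
  · rcases lt_or_ge k n with hk | hk
    · have a_eq_below : (fun i : Fin k => a i) = fun i : Fin k => c i :=
        funext fun i => a_eqOn (i.2.trans hk)
      rw [a_eqOn hk, a_eq_below]
      exact hc ⟨k, hk⟩
    · exact ((ha k).2 hk).1

end Rich

section Groupoid

variable {T : L.Theory} {Φ : ∀ n : ℕ, L.Formula (Fin n ⊕ Unit)}
  {M N : Type} [L.Structure M] [L.Structure N]

theorem tpFun_elim_comp_equiv {α β : Type*} (f : M ≃[L] N) (a : α → M) (b : β → M) :
    tpFun (L := L) (Sum.elim (f ∘ a) (f ∘ b)) = tpFun (Sum.elim a b) := by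
  rw [← Sum.comp_elim, tpFun_comp_equiv]

theorem exists_equiv_of_tpFun_elim_eq {α β : Type*} {a : α → M} {b : β → M} {a' : α → N}
    {b' : β → N} (ha : Function.Surjective a) (ha' : Function.Surjective a')
    (h : tpFun (L := L) (Sum.elim a b) = tpFun (Sum.elim a' b')) :
    ∃ f : M ≃[L] N, f ∘ a = a' ∧ f ∘ b = b' := by
  obtain ⟨f, hf⟩ := exists_equiv_of_tpFun_eq (L := L)
    (.of_comp (g := Sum.inl) (by simpa using ha)) (.of_comp (g := Sum.inl) (by simpa using ha')) h
  rw [Sum.comp_elim] at hf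
  exact ⟨f, by simpa using congrArg (· ∘ Sum.inl) hf, by simpa using congrArg (· ∘ Sum.inr) hf⟩

theorem comp_equiv_mem_dEnumeration (f : M ≃[L] N) {a : ℕ → M} (ha : a ∈ DEnumeration Φ M) :
    f ∘ a ∈ DEnumeration Φ N :=
  ⟨f.surjective.comp ha.1, (realizesD_congr (tpFun_comp_equiv f a)).2 ha.2⟩

theorem tpFun_elim_injective {α β : Type*} {a : α → M} (ha : Function.Surjective a) :
    Function.Injective fun b : β → M => tpFun (L := L) (Sum.elim a b) := by
  intro b c hbc
  obtain ⟨f, hfa, rfl⟩ := exists_equiv_of_tpFun_elim_eq ha ha hbc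
  have f_eq_id : (f : M → M) = id := ha.injective_comp_right hfa
  rw [f_eq_id, Function.id_comp]

theorem tgtMap_tpFun_elim (a b : ℕ → M) : tgtMap (L := L) (tpFun (Sum.elim a b)) = tpFun a :=
  funext fun φ => by
    rw [tgtMap, Bool.eq_iff_iff, tpFun_eq_true_iff, tpFun_eq_true_iff, Formula.realize_relabel,
      Sum.elim_comp_inl]

theorem exists_eq_tpFun_elim_of_tgtMap_eq {g : L.Formula (ℕ ⊕ ℕ) → Bool} (hg : g ∈ GPhi T Φ)
    {a : ℕ → M} (ha : Function.Surjective a) (hga : tgtMap g = tpFun a) :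
    ∃ b ∈ DEnumeration Φ M, g = tpFun (Sum.elim a b) := by
  obtain ⟨N, _, _, _, c, d, hc, hd, -, hd', rfl⟩ := hg
  rw [tgtMap_tpFun_elim] at hga
  obtain ⟨f, rfl⟩ := exists_equiv_of_tpFun_eq hc ha hga
  exact ⟨f ∘ d, comp_equiv_mem_dEnumeration f ⟨hd, hd'⟩, (tpFun_elim_comp_equiv f c d).symm⟩

variable [T.Model M] [Countable M]

theorem tpFun_elim_mem_GPhi (a b : DEnumeration Φ M) : tpFun (Sum.elim a.1 b.1) ∈ GPhi T Φ :=
  ⟨M, _, inferInstance, inferInstance, a, b, a.2.1, b.2.1, a.2.2, b.2.2, rfl⟩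

/-- The relation `tp(a,b) ∈ H` that a set `H` of groupoid elements induces on the enumerations of
`M` realizing `D_Φ`. A subset of `G_Φ(T)` is determined by the relations it induces on the countable
models of `T`. -/
def inducedRel (H : Set (L.Formula (ℕ ⊕ ℕ) → Bool)) (M : Type) [L.Structure M]
    (a b : DEnumeration Φ M) : Prop :=
  tpFun (Sum.elim a.1 b.1) ∈ H

theorem subset_iff_forall_inducedRel {H H' : Set (L.Formula (ℕ ⊕ ℕ) → Bool)}
    (hH : H ⊆ GPhi T Φ) : H ⊆ H' ↔
      ∀ (M : Type) [L.Structure M] [T.Model M] [Countable M] (a b : DEnumeration Φ M),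
        inducedRel H M a b → inducedRel H' M a b := by
  refine ⟨fun h M _ _ _ a b hab => h hab, fun h p hp => ?_⟩
  obtain ⟨M, _, _, _, a, b, ha, hb, ha', hb', rfl⟩ := hH hp
  exact h M ⟨a, ha, ha'⟩ ⟨b, hb, hb'⟩ hp

theorem basePairs_subset_iff {H : Set (L.Formula (ℕ ⊕ ℕ) → Bool)} : basePairs T Φ ⊆ H ↔
    ∀ (M : Type) [L.Structure M] [T.Model M] [Countable M] (a : DEnumeration Φ M),
      inducedRel H M a a := by
  constructor
  · exact fun h M _ hM hM' a => h ⟨M, _, hM, hM', a, a.2.1, a.2.2, rfl⟩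
  · rintro h _ ⟨M, _, _, _, a, ha, ha', rfl⟩
    exact h M ⟨a, ha, ha'⟩

theorem prodSet_subset_GPhi (A A' : Set (L.Formula (ℕ ⊕ ℕ) → Bool)) :
    prodSet T Φ A A' ⊆ GPhi T Φ := by
  rintro _ ⟨M, _, _, _, a, b, c, ha, -, hc, ha', -, hc', -, -, rfl⟩
  exact tpFun_elim_mem_GPhi ⟨a, ha, ha'⟩ ⟨c, hc, hc'⟩

theorem inducedRel_prodSet_iff {A A' : Set (L.Formula (ℕ ⊕ ℕ) → Bool)} {a c : DEnumeration Φ M} :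
    inducedRel (prodSet T Φ A A') M a c ↔ ∃ b, inducedRel A M a b ∧ inducedRel A' M b c := by
  constructor
  · rintro ⟨N, _, _, _, a', b', c', ha, hb, -, -, hb', -, hA, hA', h⟩
    obtain ⟨f, hfa, hfc⟩ := exists_equiv_of_tpFun_elim_eq ha a.2.1 h.symm
    refine ⟨⟨f ∘ b', comp_equiv_mem_dEnumeration f ⟨hb, hb'⟩⟩, ?_, ?_⟩
    · rwa [inducedRel, ← hfa, tpFun_elim_comp_equiv]
    · rwa [inducedRel, ← hfc, tpFun_elim_comp_equiv]
  · rintro ⟨b, hab, hbc⟩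
    exact ⟨M, _, inferInstance, inferInstance, a, b, c, a.2.1, b.2.1, c.2.1, a.2.2, b.2.2, c.2.2,
      hab, hbc, rfl⟩

theorem inducedRel_invSet_iff {A : Set (L.Formula (ℕ ⊕ ℕ) → Bool)} {a b : DEnumeration Φ M} :
    inducedRel (invSet T Φ A) M a b ↔ inducedRel A M b a := by
  constructor
  · rintro ⟨N, _, _, _, b', a', -, ha, -, -, hA, h⟩
    obtain ⟨f, hfa, hfb⟩ := exists_equiv_of_tpFun_elim_eq ha a.2.1 h.symm
    rwa [inducedRel, ← hfa, ← hfb, tpFun_elim_comp_equiv]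
  · exact fun h => ⟨M, _, inferInstance, inferInstance, b, a, b.2.1, a.2.1, b.2.2, a.2.2, h, rfl⟩

theorem prodSet_invSet_eq_and_basePairs_subset_iff {H : Set (L.Formula (ℕ ⊕ ℕ) → Bool)}
    (hH : H ⊆ GPhi T Φ) : prodSet T Φ H (invSet T Φ H) = H ∧ basePairs T Φ ⊆ H ↔
      ∀ (M : Type) [L.Structure M] [T.Model M] [Countable M],
        Equivalence (inducedRel (Φ := Φ) H M) := by
  rw [basePairs_subset_iff, Set.Subset.antisymm_iff,
    subset_iff_forall_inducedRel (prodSet_subset_GPhi H _), subset_iff_forall_inducedRel hH]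
  have prod_iff {M : Type} [L.Structure M] [T.Model M] [Countable M] {a c : DEnumeration Φ M} :
      inducedRel (prodSet T Φ H (invSet T Φ H)) M a c ↔
        ∃ b, inducedRel H M a b ∧ inducedRel H M c b := by
    simp only [inducedRel_prodSet_iff, inducedRel_invSet_iff]
  constructor
  · rintro ⟨⟨prod_le, -⟩, refl⟩ M _ _ _
    have symm {a b} (hab : inducedRel H M a b) : inducedRel H M b a :=
      prod_le M b a (prod_iff.2 ⟨b, refl M b, hab⟩)
    exact ⟨refl M, symm, fun {a b c} hab hbc => prod_le M a c (prod_iff.2 ⟨b, hab, symm hbc⟩)⟩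
  · refine fun h => ⟨⟨fun M _ _ _ a c hac => ?_, fun M _ _ _ a b hab => ?_⟩,
      fun M _ _ _ => (h M).refl⟩
    · obtain ⟨b, hab, hcb⟩ := prod_iff.1 hac
      exact (h M).trans hab ((h M).symm hcb)
    · exact prod_iff.2 ⟨b, hab, (h M).refl b⟩

theorem coset_eq_image {H : Set (L.Formula (ℕ ⊕ ℕ) → Bool)} (a b : DEnumeration Φ M) :
    coset T Φ (tpFun (Sum.elim a.1 b.1)) H =
      (fun c : DEnumeration Φ M => tpFun (Sum.elim a.1 c.1)) '' {c | inducedRel H M b c} := by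
  ext p
  constructor
  · rintro ⟨N, _, _, _, a', b', c', ha, -, hc, -, -, hc', hab, hbc, rfl⟩
    obtain ⟨f, hfa, hfb⟩ := exists_equiv_of_tpFun_elim_eq ha a.2.1 hab
    refine ⟨⟨f ∘ c', comp_equiv_mem_dEnumeration f ⟨hc, hc'⟩⟩, ?_, ?_⟩
    · rwa [Set.mem_ofPred_eq, inducedRel, ← hfb, tpFun_elim_comp_equiv]
    · dsimp only
      rw [← hfa, tpFun_elim_comp_equiv]
  · rintro ⟨c, hbc, rfl⟩
    exact (inducedRel_prodSet_iff).2 ⟨b, rfl, hbc⟩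

theorem coset_eq_coset_iff {H : Set (L.Formula (ℕ ⊕ ℕ) → Bool)}
    (hH : Equivalence (inducedRel (Φ := Φ) H M)) (a b c : DEnumeration Φ M) :
    coset T Φ (tpFun (Sum.elim a.1 b.1)) H = coset T Φ (tpFun (Sum.elim a.1 c.1)) H ↔
      inducedRel H M b c := by
  have injective :
      Function.Injective fun d : DEnumeration Φ M => tpFun (L := L) (Sum.elim a.1 d.1) :=
    (tpFun_elim_injective a.2.1).comp Subtype.val_injective
  rw [coset_eq_image, coset_eq_image, Set.image_eq_image injective, Set.ext_iff]
  exact ⟨fun h => (h c).2 (hH.refl c),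
    fun hbc d => ⟨hH.trans (hH.symm hbc), hH.trans hbc⟩⟩

end Groupoid

section DefinableRelations

variable {T : L.Theory} {Φ : ∀ n : ℕ, L.Formula (Fin n ⊕ Unit)} {n : ℕ}
  {E : L.Formula (Fin n ⊕ Fin n)} {M : Type*} [L.Structure M]

theorem realizePair_congr {a b c d : ℕ → M} (hac : Set.EqOn a c (Set.Iio n))
    (hbd : Set.EqOn b d (Set.Iio n)) : RealizePair E a b ↔ RealizePair E c d := by
  have ac : (fun i : Fin n => a i) = fun i : Fin n => c i := funext fun i => hac i.2
  have bd : (fun i : Fin n => b i) = fun i : Fin n => d i := funext fun i => hbd i.2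
  rw [RealizePair, RealizePair, ac, bd]

theorem realize_relabel_sumMap_val_iff {a b : ℕ → M} :
    (E.relabel (Sum.map Fin.val Fin.val)).Realize (Sum.elim a b) ↔ RealizePair E a b := by
  rw [Formula.realize_relabel, Sum.elim_comp_map]
  rfl

theorem realizePair_existsOff_iff {ψ : L.Formula (ℕ ⊕ ℕ)} {a b : ℕ → M} :
    RealizePair (existsOff (Sum.map Fin.val Fin.val : Fin n ⊕ Fin n → ℕ ⊕ ℕ) ψ) a b ↔
      ∃ a' b' : ℕ → M, Set.EqOn a' a (Set.Iio n) ∧ Set.EqOn b' b (Set.Iio n) ∧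
        ψ.Realize (Sum.elim a' b') := by
  rw [← realize_relabel_sumMap_val_iff, Formula.realize_relabel, realize_existsOff]
  constructor
  · rintro ⟨x, hx, hψ⟩
    exact ⟨x ∘ Sum.inl, x ∘ Sum.inr, fun i hi => congrFun hx (Sum.inl ⟨i, hi⟩),
      fun i hi => congrFun hx (Sum.inr ⟨i, hi⟩), by rwa [Sum.elim_comp_inl_inr]⟩
  · rintro ⟨a', b', haa', hbb', hψ⟩
    refine ⟨Sum.elim a' b', funext ?_, hψ⟩
    rintro (i | i)
    exacts [haa' i.2, hbb' i.2]

theorem RealizesD.exists_dEnumeration_eqOn (hΦ : IsRich Φ) [Countable M] {a : ℕ → M}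
    (ha : RealizesD Φ a) (n : ℕ) : ∃ a' : DEnumeration Φ M, Set.EqOn a' a (Set.Iio n) := by
  obtain ⟨a', ha', h⟩ := _root_.exists_dEnumeration_eqOn hΦ (ha.realizesDn n)
  exact ⟨⟨a', ha'⟩, h⟩

theorem fmlPairSet_subset_GPhi : FmlPairSet T Φ n E ⊆ GPhi T Φ :=
  Set.sep_subset _ _

theorem inducedRel_fmlPairSet_iff {M : Type} [L.Structure M] [T.Model M] [Countable M]
    {a b : DEnumeration Φ M} :
    inducedRel (FmlPairSet T Φ n E) M a b ↔ RealizePair E a.1 b.1 := by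
  rw [← realize_relabel_sumMap_val_iff, ← tpFun_eq_true_iff]
  exact and_iff_right (tpFun_elim_mem_GPhi a b)

theorem isDefEquivRel_iff_forall_equivalence (hΦ : IsRich Φ) : IsDefEquivRel T Φ n E ↔
    ∀ (M : Type) [L.Structure M] [T.Model M] [Countable M],
      Equivalence (inducedRel (Φ := Φ) (FmlPairSet T Φ n E) M) := by
  constructor
  · intro h M _ _ _
    obtain ⟨refl, symm, trans⟩ := h M inferInstance inferInstance inferInstance
    refine ⟨fun a => ?_, fun {a b} => ?_, fun {a b c} => ?_⟩ <;>
      simp only [inducedRel_fmlPairSet_iff]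
    exacts [refl a a.2.2, symm a b a.2.2 b.2.2, trans a b c a.2.2 b.2.2 c.2.2]
  · intro h M _ _ _
    have extend {a : ℕ → M} (ha : RealizesD Φ a) := ha.exists_dEnumeration_eqOn hΦ n
    refine ⟨fun a ha => ?_, fun a b ha hb => ?_, fun a b c ha hb hc => ?_⟩
    · obtain ⟨a', haa'⟩ := extend ha
      rw [← realizePair_congr haa' haa', ← inducedRel_fmlPairSet_iff (T := T)]
      exact (h M).refl a'
    · obtain ⟨a', haa'⟩ := extend ha
      obtain ⟨b', hbb'⟩ := extend hb
      rw [← realizePair_congr haa' hbb', ← realizePair_congr hbb' haa']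
      simp only [← inducedRel_fmlPairSet_iff (T := T)]
      exact (h M).symm
    · obtain ⟨a', haa'⟩ := extend ha
      obtain ⟨b', hbb'⟩ := extend hb
      obtain ⟨c', hcc'⟩ := extend hc
      rw [← realizePair_congr haa' hbb', ← realizePair_congr hbb' hcc',
        ← realizePair_congr haa' hcc']
      simp only [← inducedRel_fmlPairSet_iff (T := T)]
      exact (h M).trans

theorem fmlPairSet_eq_iff (hΦ : IsRich Φ) {n' : ℕ} {E' : L.Formula (Fin n' ⊕ Fin n')} :
    FmlPairSet T Φ n E = FmlPairSet T Φ n' E' ↔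
      ∀ (M : Type) (_ : L.Structure M) (_ : T.Model M) (_ : Countable M) (a b : ℕ → M),
        RealizesD Φ a → RealizesD Φ b → (RealizePair E a b ↔ RealizePair E' a b) := by
  constructor
  · intro h M _ _ _ a b ha hb
    obtain ⟨a', haa'⟩ := ha.exists_dEnumeration_eqOn hΦ (max n n')
    obtain ⟨b', hbb'⟩ := hb.exists_dEnumeration_eqOn hΦ (max n n')
    have left_le := Set.Iio_subset_Iio (le_max_left n n')
    have right_le := Set.Iio_subset_Iio (le_max_right n n')
    rw [← realizePair_congr (haa'.mono left_le) (hbb'.mono left_le),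
      ← realizePair_congr (haa'.mono right_le) (hbb'.mono right_le),
      ← inducedRel_fmlPairSet_iff (T := T), h, inducedRel_fmlPairSet_iff]
  · intro h
    refine subset_antisymm ((subset_iff_forall_inducedRel fmlPairSet_subset_GPhi).2 ?_)
      ((subset_iff_forall_inducedRel fmlPairSet_subset_GPhi).2 ?_) <;>
    · intro M _ _ _ a b
      simp only [inducedRel_fmlPairSet_iff, h M _ _ _ a b a.2.2 b.2.2, imp_self]

theorem exists_isClopen_fmlPairSet_eq_inter :
    ∃ U, IsClopen U ∧ FmlPairSet T Φ n E = U ∩ GPhi T Φ :=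
  ⟨_, isClopen_setOf_apply_eq_true _, Set.inter_comm _ _⟩

end DefinableRelations

section ClopenSubgroupoids

variable {T : L.Theory} {Φ : ∀ n : ℕ, L.Formula (Fin n ⊕ Unit)}

theorem isCompact_BPhi [Countable L.Symbols] (T : L.Theory)
    (Φ : ∀ n : ℕ, L.Formula (Fin n ⊕ Unit)) : IsCompact (BPhi T Φ) := by
  convert isCompact_stoneSpace_inter T (dFormula Φ)
  ext p
  constructor
  · rintro ⟨M, _, hM, hM', a, ha, rfl⟩
    exact ⟨⟨M, _, hM, hM', ⟨a 0⟩, a, rfl⟩,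
      fun k => tpFun_eq_true_iff.2 (realizesD_iff_forall_realize_dFormula.1 ha k)⟩
  · rintro ⟨⟨M, _, hM, hM', -, a, rfl⟩, ha⟩
    exact ⟨M, _, hM, hM', a,
      realizesD_iff_forall_realize_dFormula.2 fun k => tpFun_eq_true_iff.1 (ha k), rfl⟩

/-- The space `S_{2 × D_Φ}(T)` of types of pairs of realizations of `D_Φ`: a compact subspace of
`S_{2×ℕ}(T)` that contains `G_Φ(T)`. -/
def dPairTypes (T : L.Theory) (Φ : ∀ n : ℕ, L.Formula (Fin n ⊕ Unit)) :
    Set (L.Formula (ℕ ⊕ ℕ) → Bool) :=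
  {p | ∃ (M : Type) (_ : L.Structure M) (_ : T.Model M) (_ : Countable M) (a b : ℕ → M),
    RealizesD Φ a ∧ RealizesD Φ b ∧ p = tpFun (Sum.elim a b)}

theorem dPairTypes_subset_stoneSpace : dPairTypes T Φ ⊆ stoneSpace T (ℕ ⊕ ℕ) := by
  rintro _ ⟨M, _, hM, hM', a, b, -, -, rfl⟩
  exact ⟨M, _, hM, hM', ⟨a 0⟩, _, rfl⟩

theorem GPhi_subset_dPairTypes : GPhi T Φ ⊆ dPairTypes T Φ :=
  fun _ ⟨M, _, hM, hM', a, b, _, _, ha, hb, h⟩ => ⟨M, _, hM, hM', a, b, ha, hb, h⟩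

theorem isCompact_dPairTypes [Countable L.Symbols] (T : L.Theory)
    (Φ : ∀ n : ℕ, L.Formula (Fin n ⊕ Unit)) : IsCompact (dPairTypes T Φ) := by
  let Γ (k : ℕ) : L.Formula (ℕ ⊕ ℕ) :=
    (dFormula Φ k).relabel Sum.inl ⊓ (dFormula Φ k).relabel Sum.inr
  have Γ_iff {M : Type} [L.Structure M] (x : ℕ ⊕ ℕ → M) :
      (∀ k, tpFun x (Γ k) = true) ↔ RealizesD Φ (x ∘ Sum.inl) ∧ RealizesD Φ (x ∘ Sum.inr) := by
    simp only [Γ, tpFun_eq_true_iff, Formula.realize_inf, Formula.realize_relabel,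
      realizesD_iff_forall_realize_dFormula, forall_and]
  convert isCompact_stoneSpace_inter T Γ
  ext p
  constructor
  · rintro ⟨M, _, hM, hM', a, b, ha, hb, rfl⟩
    exact ⟨⟨M, _, hM, hM', ⟨a 0⟩, _, rfl⟩, (Γ_iff _).2 ⟨ha, hb⟩⟩
  · rintro ⟨⟨M, _, hM, hM', -, x, rfl⟩, hx⟩
    obtain ⟨ha, hb⟩ := (Γ_iff x).1 hx
    exact ⟨M, _, hM, hM', _, _, ha, hb, by rw [Sum.elim_comp_inl_inr]⟩

/- Every point of the compact space `B_Φ(T)` has a neighbourhood on which some `n` works. -/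
theorem exists_forall_eqOn_tpFun_mem_of_isOpen [Countable L.Symbols] (hΦ : IsRich Φ)
    {U : Set (L.Formula (ℕ ⊕ ℕ) → Bool)} (hU : IsOpen U) (hTU : basePairs T Φ ⊆ U) :
    ∃ n, ∀ (M : Type) [L.Structure M] [T.Model M] [Countable M] {a b : ℕ → M},
      RealizesD Φ a → Set.EqOn a b (Set.Iio n) → tpFun (Sum.elim a b) ∈ U := by
  suffices ∃ n, ∀ (M : Type) [L.Structure M] [T.Model M] [Countable M] {a b : ℕ → M},
      tpFun a ∈ BPhi T Φ → Set.EqOn a b (Set.Iio n) → tpFun (Sum.elim a b) ∈ U from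
    this.imp fun n hn M _ hM hM' a b ha => hn M ⟨M, _, hM, hM', a, ha, rfl⟩
  refine (isCompact_BPhi T Φ).induction_on (p := fun s => ∃ n, ∀ (M : Type) [L.Structure M]
    [T.Model M] [Countable M] {a b : ℕ → M}, tpFun a ∈ s → Set.EqOn a b (Set.Iio n) →
      tpFun (Sum.elim a b) ∈ U) ⟨0, fun _ _ _ _ _ _ h => h.elim⟩
    (fun s t hst ⟨n, hn⟩ => ⟨n, fun M _ _ _ a b ha => hn M (hst ha)⟩) ?_ ?_
  · rintro s t ⟨n, hn⟩ ⟨n', hn'⟩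
    refine ⟨max n n', fun M _ _ _ a b ha hab => ha.elim (fun ha => hn M ha (hab.mono ?_))
      fun ha => hn' M ha (hab.mono ?_)⟩
    exacts [Set.Iio_subset_Iio (le_max_left _ _), Set.Iio_subset_Iio (le_max_right _ _)]
  · rintro _ ⟨M, _, hM, _, a, ha, rfl⟩
    obtain ⟨S, b, hb, hba⟩ := ha.exists_tpFun_eq hΦ
    have hbU : tpFun (Sum.elim b b) ∈ U :=
      hTU ⟨S, _, inferInstance, hb.1.countable, b, hb.1, hb.2, rfl⟩
    obtain ⟨φ, hφ, hφU⟩ := exists_formula_of_tpFun_mem_isOpen hU hbU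
    obtain ⟨n, hn⟩ := exists_realize_iff_of_forall_lt (Sum.elim id id) φ
    have realize_diagonal {M : Type} [L.Structure M] (a : ℕ → M) :
        tpFun a (φ.relabel (Sum.elim id id)) = true ↔ φ.Realize (Sum.elim a a) := by
      rw [tpFun_eq_true_iff, Formula.realize_relabel, Sum.comp_elim, Function.comp_id]
    refine ⟨_, mem_nhdsWithin_of_mem_nhds ((isClopen_setOf_apply_eq_true
      (φ.relabel (Sum.elim id id))).isOpen.mem_nhds ?_), n, fun M _ _ _ a b ha hab => hφU ?_⟩
    · rw [← hba, Set.mem_ofPred_eq, realize_diagonal]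
      exact hφ
    · refine (hn ?_).1 ((realize_diagonal a).1 ha)
      rintro (i | i) hi
      exacts [rfl, hab hi]

theorem exists_formula_exists_lift_mem_of_isOpen (hΦ : IsRich Φ) (n : ℕ)
    {U : Set (L.Formula (ℕ ⊕ ℕ) → Bool)} (hU : IsOpen U) {M : Type} [L.Structure M] {a b : ℕ → M}
    (ha : RealizesD Φ a) (hb : RealizesD Φ b) (hab : tpFun (Sum.elim a b) ∈ U) :
    ∃ θ : L.Formula (Fin n ⊕ Fin n), RealizePair θ a b ∧
      ∀ (N : Type) [L.Structure N] [Countable N] {c d : ℕ → N}, RealizePair θ c d →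
        ∃ c' d' : DEnumeration Φ N, Set.EqOn c' c (Set.Iio n) ∧ Set.EqOn d' d (Set.Iio n) ∧
          tpFun (Sum.elim c'.1 d'.1) ∈ U := by
  obtain ⟨χ, hχ, hχU⟩ := exists_formula_of_tpFun_mem_isOpen hU hab
  obtain ⟨m, hm⟩ := exists_realize_iff_of_forall_lt (Sum.elim id id) χ
  let δ : L.Formula ℕ := Formula.iInf fun k : Fin (max n m) => dFormula Φ k
  have δ_iff {N : Type} [L.Structure N] {c : ℕ → N} :
      δ.Realize c ↔ RealizesDn Φ (max n m) fun i => c i := by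
    rw [Formula.realize_iInf, realizesDn_iff_forall_realize_dFormula]
  refine ⟨existsOff (Sum.map Fin.val Fin.val) (χ ⊓ (δ.relabel Sum.inl ⊓ δ.relabel Sum.inr)), ?_, ?_⟩
  · simp only [realizePair_existsOff_iff, Formula.realize_inf, Formula.realize_relabel]
    exact ⟨a, b, Set.eqOn_refl _ _, Set.eqOn_refl _ _, hχ, δ_iff.2 (ha.realizesDn _),
      δ_iff.2 (hb.realizesDn _)⟩
  intro N _ _ c d hcd
  simp only [realizePair_existsOff_iff, Formula.realize_inf, Formula.realize_relabel] at hcd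
  obtain ⟨c₀, d₀, hc₀c, hd₀d, hχ₀, hc₀, hd₀⟩ := hcd
  obtain ⟨c', hc', hc'c₀⟩ := exists_dEnumeration_eqOn hΦ (δ_iff.1 hc₀)
  obtain ⟨d', hd', hd'd₀⟩ := exists_dEnumeration_eqOn hΦ (δ_iff.1 hd₀)
  have n_le := Set.Iio_subset_Iio (le_max_left n m)
  refine ⟨⟨c', hc'⟩, ⟨d', hd'⟩, (hc'c₀.mono n_le).trans hc₀c, (hd'd₀.mono n_le).trans hd₀d,
    hχU ((hm ?_).2 hχ₀)⟩
  rintro (i | i) hi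
  exacts [hc'c₀ (lt_max_of_lt_right hi), hd'd₀ (lt_max_of_lt_right hi)]

/-- Membership of `tp(a,b)` in `K` depends only on `a_{<n}` and `b_{<n}`, for enumerations `a`, `b`
realizing `D_Φ` of a common countable model of `T`. -/
def DeterminedBelow (T : L.Theory) (Φ : ∀ n : ℕ, L.Formula (Fin n ⊕ Unit)) (n : ℕ)
    (K : Set (L.Formula (ℕ ⊕ ℕ) → Bool)) : Prop :=
  ∀ (M : Type) [L.Structure M] [T.Model M] [Countable M] {a b a' b' : DEnumeration Φ M},
    Set.EqOn a.1 a'.1 (Set.Iio n) → Set.EqOn b.1 b'.1 (Set.Iio n) →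
      inducedRel K M a b → inducedRel K M a' b'

variable {H U C K : Set (L.Formula (ℕ ⊕ ℕ) → Bool)} {n : ℕ}

theorem exists_determinedBelow_of_equivalence [Countable L.Symbols] (hΦ : IsRich Φ)
    (hU : IsOpen U) (hHU : H = U ∩ GPhi T Φ)
    (hH : ∀ (M : Type) [L.Structure M] [T.Model M] [Countable M],
      Equivalence (inducedRel (Φ := Φ) H M)) : ∃ n, DeterminedBelow T Φ n H := by
  subst hHU
  have basePairs_subset : basePairs T Φ ⊆ U :=
    (basePairs_subset_iff.2 fun M _ _ _ => (hH M).refl).trans Set.inter_subset_left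
  obtain ⟨n, hn⟩ := exists_forall_eqOn_tpFun_mem_of_isOpen hΦ hU basePairs_subset
  refine ⟨n, fun M _ _ _ a b a' b' haa' hbb' hab => ?_⟩
  have rel_of_eqOn {c c' : DEnumeration Φ M} (h : Set.EqOn c.1 c'.1 (Set.Iio n)) :
      inducedRel (U ∩ GPhi T Φ) M c c' := ⟨hn M c.2.2 h, tpFun_elim_mem_GPhi c c'⟩
  exact (hH M).trans (rel_of_eqOn haa'.symm) ((hH M).trans hab (rel_of_eqOn hbb'))

theorem DeterminedBelow.sdiff (hH : DeterminedBelow T Φ n H) :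
    DeterminedBelow T Φ n (GPhi T Φ \ H) :=
  fun M _ _ _ _ _ a' b' haa' hbb' hab =>
    ⟨tpFun_elim_mem_GPhi a' b', fun h => hab.2 (hH M haa'.symm hbb'.symm h)⟩

theorem DeterminedBelow.exists_fmlPairSet_subset (hK : DeterminedBelow T Φ n K)
    (hΦ : IsRich Φ) (hU : IsOpen U) (hKU : K = U ∩ GPhi T Φ) {M : Type} [L.Structure M]
    {a b : DEnumeration Φ M} (hab : inducedRel K M a b) :
    ∃ θ : L.Formula (Fin n ⊕ Fin n), RealizePair θ a.1 b.1 ∧ FmlPairSet T Φ n θ ⊆ K := by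
  subst hKU
  obtain ⟨θ, hθ, hθU⟩ := exists_formula_exists_lift_mem_of_isOpen hΦ n hU a.2.2 b.2.2 hab.1
  refine ⟨θ, hθ, (subset_iff_forall_inducedRel fmlPairSet_subset_GPhi).2 fun N _ _ _ c d hcd => ?_⟩
  obtain ⟨c', d', hc, hd, hU'⟩ := hθU N (inducedRel_fmlPairSet_iff.1 hcd)
  exact hK N hc hd ⟨hU', tpFun_elim_mem_GPhi c' d'⟩

theorem DeterminedBelow.exists_eq_fmlPairSet [Countable L.Symbols] (hH : DeterminedBelow T Φ n H)
    (hΦ : IsRich Φ) (hU : IsOpen U) (hHU : H = U ∩ GPhi T Φ) (hC : IsClosed C)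
    (hHC : H = C ∩ GPhi T Φ) : ∃ E : L.Formula (Fin n ⊕ Fin n), H = FmlPairSet T Φ n E := by
  have H_subset : H ⊆ GPhi T Φ := hHU ▸ Set.inter_subset_right
  have sdiff_eq : GPhi T Φ \ H = Cᶜ ∩ GPhi T Φ := by
    rw [hHC, Set.sdiff_inter_self_eq_sdiff, Set.sdiff_eq, Set.inter_comm]
  have exists_subset {M : Type} [L.Structure M] [T.Model M] [Countable M]
      (a b : DEnumeration Φ M) : ∃ θ : L.Formula (Fin n ⊕ Fin n), RealizePair θ a.1 b.1 ∧
        (FmlPairSet T Φ n θ ⊆ GPhi T Φ \ H ∨ FmlPairSet T Φ n θ ⊆ H) := by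
    by_cases hab : inducedRel H M a b
    · exact (hH.exists_fmlPairSet_subset hΦ hU hHU hab).imp fun θ hθ => hθ.imp_right .inr
    · exact (hH.sdiff.exists_fmlPairSet_subset hΦ hC.isOpen_compl sdiff_eq
        ⟨tpFun_elim_mem_GPhi a b, hab⟩).imp fun θ hθ => hθ.imp_right .inl
  obtain ⟨E, hHE, hE⟩ := exists_formula_separating_of_isCompact (Sum.map Fin.val Fin.val)
    (isCompact_dPairTypes T Φ) dPairTypes_subset_stoneSpace
    (H_subset.trans GPhi_subset_dPairTypes) (Set.sdiff_subset.trans GPhi_subset_dPairTypes)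
    (B := GPhi T Φ \ H) fun p ⟨M, _, _, _, a, b, ha, hb, hp⟩ => by
      obtain ⟨a', haa'⟩ := ha.exists_dEnumeration_eqOn hΦ n
      obtain ⟨b', hbb'⟩ := hb.exists_dEnumeration_eqOn hΦ n
      obtain ⟨θ, hθ, hθH⟩ := exists_subset a' b'
      refine ⟨θ, ?_, hθH.imp (fun h q hq hqθ => (h ⟨H_subset hq, hqθ⟩).2 hq)
        fun h q hq hqθ => hq.2 (h ⟨hq.1, hqθ⟩)⟩
      rwa [hp, tpFun_eq_true_iff, realize_relabel_sumMap_val_iff, ← realizePair_congr haa' hbb']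
  exact ⟨E, subset_antisymm (fun q hq => ⟨H_subset hq, hHE q hq⟩)
    fun q hq => by_contra fun hqH => hE q ⟨hq.1, hqH⟩ hq.2⟩

theorem exists_isDefEquivRel_eq_fmlPairSet [Countable L.Symbols] (hΦ : IsRich Φ)
    (hU : IsOpen U) (hHU : H = U ∩ GPhi T Φ) (hC : IsClosed C) (hHC : H = C ∩ GPhi T Φ)
    (hH : ∀ (M : Type) [L.Structure M] [T.Model M] [Countable M],
      Equivalence (inducedRel (Φ := Φ) H M)) :
    ∃ (n : ℕ) (E : L.Formula (Fin n ⊕ Fin n)), IsDefEquivRel T Φ n E ∧ H = FmlPairSet T Φ n E := by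
  obtain ⟨n, hn⟩ := exists_determinedBelow_of_equivalence hΦ hU hHU hH
  obtain ⟨E, rfl⟩ := hn.exists_eq_fmlPairSet hΦ hU hHU hC hHC
  exact ⟨n, E, (isDefEquivRel_iff_forall_equivalence hΦ).2 hH, rfl⟩

end ClopenSubgroupoids

theorem defEquivRel_clopen_subgroupoid_bijection_general {L : FirstOrder.Language}
    [Countable L.Symbols] (T : L.Theory)
    (Φ : ∀ n : ℕ, L.Formula (Fin n ⊕ Unit)) (hΦ : IsRich Φ) :
    (∀ (n : ℕ) (E : L.Formula (Fin n ⊕ Fin n)), IsDefEquivRel T Φ n E →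
      (∃ U, IsOpen U ∧ FmlPairSet T Φ n E = U ∩ GPhi T Φ) ∧
      (∃ C, IsClosed C ∧ FmlPairSet T Φ n E = C ∩ GPhi T Φ) ∧
      prodSet T Φ (FmlPairSet T Φ n E) (invSet T Φ (FmlPairSet T Φ n E)) =
        FmlPairSet T Φ n E ∧
      basePairs T Φ ⊆ FmlPairSet T Φ n E) ∧
    (∀ H : Set (L.Formula (ℕ ⊕ ℕ) → Bool), H ⊆ GPhi T Φ →
      (∃ U, IsOpen U ∧ H = U ∩ GPhi T Φ) →
      (∃ C, IsClosed C ∧ H = C ∩ GPhi T Φ) →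
      prodSet T Φ H (invSet T Φ H) = H →
      basePairs T Φ ⊆ H →
      ∃ (n : ℕ) (E : L.Formula (Fin n ⊕ Fin n)),
        IsDefEquivRel T Φ n E ∧ H = FmlPairSet T Φ n E) ∧
    (∀ (n : ℕ) (E : L.Formula (Fin n ⊕ Fin n)) (n' : ℕ) (E' : L.Formula (Fin n' ⊕ Fin n')),
      FmlPairSet T Φ n E = FmlPairSet T Φ n' E' ↔
        ∀ (M : Type) (_ : L.Structure M) (_ : T.Model M) (_ : Countable M) (a b : ℕ → M),
          RealizesD Φ a → RealizesD Φ b → (RealizePair E a b ↔ RealizePair E' a b)) ∧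
    (∀ (n : ℕ) (E : L.Formula (Fin n ⊕ Fin n)), IsDefEquivRel T Φ n E →
      ∀ (M : Type) (_ : L.Structure M) (_ : T.Model M) (_ : Countable M) (a : ℕ → M),
        Function.Surjective a → RealizesD Φ a →
        (∀ g ∈ GPhi T Φ, tgtMap g = tpFun a →
          ∃ b : ℕ → M, Function.Surjective b ∧ RealizesD Φ b ∧
            g = tpFun (Sum.elim a b)) ∧
        (∀ b c : ℕ → M, Function.Surjective b → RealizesD Φ b →
          Function.Surjective c → RealizesD Φ c →
          (coset T Φ (tpFun (Sum.elim a b)) (FmlPairSet T Φ n E) =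
              coset T Φ (tpFun (Sum.elim a c)) (FmlPairSet T Φ n E) ↔
            RealizePair E b c)) ∧
        (∀ b' : ℕ → M, RealizesD Φ b' →
          ∃ b : ℕ → M, Function.Surjective b ∧ RealizesD Φ b ∧ RealizePair E b b')) := by
  refine ⟨fun n E hE => ?_, fun H hHG ⟨U, hU, hHU⟩ ⟨C, hC, hHC⟩ hprod hbase => ?_,
    fun n E n' E' => fmlPairSet_eq_iff hΦ, fun n E hE M _ _ _ a ha hDa => ⟨?_, ?_, ?_⟩⟩
  · obtain ⟨U, hU, hEU⟩ := exists_isClopen_fmlPairSet_eq_inter (T := T) (Φ := Φ) (E := E)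
    exact ⟨⟨U, hU.isOpen, hEU⟩, ⟨U, hU.isClosed, hEU⟩,
      (prodSet_invSet_eq_and_basePairs_subset_iff fmlPairSet_subset_GPhi).2
        ((isDefEquivRel_iff_forall_equivalence hΦ).1 hE)⟩
  · exact exists_isDefEquivRel_eq_fmlPairSet hΦ hU hHU hC hHC
      ((prodSet_invSet_eq_and_basePairs_subset_iff hHG).1 ⟨hprod, hbase⟩)
  · intro g hg hga
    obtain ⟨b, hb, hgb⟩ := exists_eq_tpFun_elim_of_tgtMap_eq hg ha hga
    exact ⟨b, hb.1, hb.2, hgb⟩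
  · intro b c hb hDb hc hDc
    exact (coset_eq_coset_iff ((isDefEquivRel_iff_forall_equivalence hΦ).1 hE M)
      ⟨a, ha, hDa⟩ ⟨b, hb, hDb⟩ ⟨c, hc, hDc⟩).trans inducedRel_fmlPairSet_iff
  · intro b' hb'
    obtain ⟨b, hbb'⟩ := hb'.exists_dEnumeration_eqOn hΦ n
    exact ⟨b, b.2.1, b.2.2, (realizePair_congr (Set.eqOn_refl _ _) hbb').1
      ((hE M _ inferInstance inferInstance).1 b b.2.2)⟩

/-- STATEMENT 19: the map `E ↦ [E]_G` defines a bijection between the definable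
equivalence relations on `D_Φ` (up to `T`-equivalence on `D_Φ`) and the clopen subsets
`H ⊆ G_Φ(T)` with `H = H · H⁻¹` and `B_Φ(T) ⊆ H`.  Moreover, if `H = [E]_G` and
`a ∈ M^ℕ` realizes `D_Φ` and enumerates a countable model `M`, with `e = tp(a)`, then
`tp(a,b) ↦ [b]_E` is a bijection between the coset space `{gH : t_g = e}` and the set
of `E`-classes of realizations of `D_Φ` in `M`. -/
theorem defEquivRel_clopen_subgroupoid_bijection {L : FirstOrder.Language}
    [Countable L.Symbols] (T : L.Theory) (hT : T.IsComplete)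
    (Φ : ∀ n : ℕ, L.Formula (Fin n ⊕ Unit)) (hΦ : IsRich Φ) :
    -- `[E]_G` is a clopen subset of `G_Φ(T)` with `[E]_G = [E]_G · [E]_G⁻¹`
    -- containing `B_Φ(T)`
    (∀ (n : ℕ) (E : L.Formula (Fin n ⊕ Fin n)), IsDefEquivRel T Φ n E →
      (∃ U, IsOpen U ∧ FmlPairSet T Φ n E = U ∩ GPhi T Φ) ∧
      (∃ C, IsClosed C ∧ FmlPairSet T Φ n E = C ∩ GPhi T Φ) ∧
      prodSet T Φ (FmlPairSet T Φ n E) (invSet T Φ (FmlPairSet T Φ n E)) =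
        FmlPairSet T Φ n E ∧
      basePairs T Φ ⊆ FmlPairSet T Φ n E) ∧
    -- the map `E ↦ [E]_G` is onto such subsets
    (∀ H : Set (L.Formula (ℕ ⊕ ℕ) → Bool), H ⊆ GPhi T Φ →
      (∃ U, IsOpen U ∧ H = U ∩ GPhi T Φ) →
      (∃ C, IsClosed C ∧ H = C ∩ GPhi T Φ) →
      prodSet T Φ H (invSet T Φ H) = H →
      basePairs T Φ ⊆ H →
      ∃ (n : ℕ) (E : L.Formula (Fin n ⊕ Fin n)),
        IsDefEquivRel T Φ n E ∧ H = FmlPairSet T Φ n E) ∧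
    -- and it is injective up to `T`-equivalence on `D_Φ`
    (∀ (n : ℕ) (E : L.Formula (Fin n ⊕ Fin n)) (n' : ℕ) (E' : L.Formula (Fin n' ⊕ Fin n')),
      IsDefEquivRel T Φ n E → IsDefEquivRel T Φ n' E' →
      (FmlPairSet T Φ n E = FmlPairSet T Φ n' E' ↔
        ∀ (M : Type) (_ : L.Structure M) (_ : T.Model M) (_ : Countable M) (a b : ℕ → M),
          RealizesD Φ a → RealizesD Φ b → (RealizePair E a b ↔ RealizePair E' a b))) ∧
    -- the coset space `{gH : t_g = tp(a)}` is in bijection with `D_Φ/E` in `M`,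
    -- via `tp(a,b) ↦ [b]_E`
    (∀ (n : ℕ) (E : L.Formula (Fin n ⊕ Fin n)), IsDefEquivRel T Φ n E →
      ∀ (M : Type) (_ : L.Structure M) (_ : T.Model M) (_ : Countable M) (a : ℕ → M),
        Function.Surjective a → RealizesD Φ a →
        -- every `g ∈ G_Φ(T)` with `t_g = tp(a)` is of the form `tp(a,b)`,
        -- `b` an enumeration of `M` realizing `D_Φ`
        (∀ g ∈ GPhi T Φ, tgtMap g = tpFun a →
          ∃ b : ℕ → M, Function.Surjective b ∧ RealizesD Φ b ∧
            g = tpFun (Sum.elim a b)) ∧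
        -- cosets `tp(a,b)·[E]_G` and `tp(a,c)·[E]_G` coincide exactly when `E(b,c)`
        (∀ b c : ℕ → M, Function.Surjective b → RealizesD Φ b →
          Function.Surjective c → RealizesD Φ c →
          (coset T Φ (tpFun (Sum.elim a b)) (FmlPairSet T Φ n E) =
              coset T Φ (tpFun (Sum.elim a c)) (FmlPairSet T Φ n E) ↔
            RealizePair E b c)) ∧
        -- every `E`-class of a realization of `D_Φ` in `M` is the class of an
        -- enumeration of `M` realizing `D_Φ`
        (∀ b' : ℕ → M, RealizesD Φ b' →
          ∃ b : ℕ → M, Function.Surjective b ∧ RealizesD Φ b ∧ RealizePair E b b')) :=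
  let ⟨h_clopen, h_surjective, h_injective, h_cosets⟩ :=
    defEquivRel_clopen_subgroupoid_bijection_general T Φ hΦ
  ⟨h_clopen, h_surjective, fun n E n' E' _ _ => h_injective n E n' E', h_cosets⟩
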